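/- arXiv:2402.12313 — 3 statements merged into one kernel-verified Lean document; each statement's English description precedes it below -/
import Mathlib

section
/- The map (Γ, g) ↦ (Γ ∩ Cay(G,X), g), where Γ ∩ Cay(G,X) := (V(Γ), E(Γ) ∩ (G × X)) is obtained from Γ by erasing all edges labeled in Ḡ, is an isomorphism of F-inverse monoids from M^∧(G,Y) onto F(G,X): it is a bijection, it preserves multiplication, inversion and the m-operation (sending m(A,g) = (Γ_ḡ^∧, g) to m of the image, namely (({1,g},∅), g)), and it sends the generator (Γ_x^∧, [x]_G) to (Γ_x, [x]_G) for every x ∈ X. -/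
namespace FInvPaper

/-- The extended alphabet `Y = X ⊔ Ḡ`, with `Ḡ` a bijective copy of `G`. -/
abbrev YT (X G : Type*) := X ⊕ G

/-- The extension `ι_Y : Y → G` of the assignment map `ι : X → G`. -/
def iotaY {X G : Type*} (ι : X → G) : YT X G → G := Sum.elim ι id

/-- A (candidate) subgraph of `Cay(G,Y)`: a set of vertices together with a set
of positive edges, an edge `(a, y)` joining `a` to `a * ι_Y y`. -/
abbrev Graph (X G : Type*) := Set G × Set (G × YT X G)

variable {X G : Type*} [Group G]

/-- `Γ` is a finite subgraph of `Cay(G,Y)` containing the origin. -/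
def IsSubgraph (ι : X → G) (Γ : Graph X G) : Prop :=
  Γ.1.Finite ∧ Γ.2.Finite ∧ (1 : G) ∈ Γ.1 ∧
    ∀ e ∈ Γ.2, e.1 ∈ Γ.1 ∧ e.1 * iotaY ι e.2 ∈ Γ.1

/-- The relation on vertices given by the positive edges of `Γ`. -/
def edgeRel (ι : X → G) (Γ : Graph X G) (a b : G) : Prop :=
  ∃ y : YT X G, (a, y) ∈ Γ.2 ∧ b = a * iotaY ι y

/-- `Γ` is connected: every vertex is related to the origin `1` by the
equivalence relation generated by the edge relation. -/
def IsConn (ι : X → G) (Γ : Graph X G) : Prop :=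
  ∀ v ∈ Γ.1, Relation.EqvGen (edgeRel ι Γ) 1 v

/-- `𝒳_Y`: all finite connected subgraphs of `Cay(G,Y)` containing the origin. -/
def XY (ι : X → G) : Set (Graph X G) :=
  {Γ | IsSubgraph ι Γ ∧ IsConn ι Γ}

/-- The translate `gΓ`. -/
def gmul (g : G) (Γ : Graph X G) : Graph X G :=
  ((g * ·) '' Γ.1, (fun e => (g * e.1, e.2)) '' Γ.2)

/-- Componentwise union of graphs. -/
def gunion (Γ Δ : Graph X G) : Graph X G := (Γ.1 ∪ Δ.1, Γ.2 ∪ Δ.2)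

/-- Componentwise inclusion of graphs. -/
def gsub (Γ Δ : Graph X G) : Prop := Γ.1 ⊆ Δ.1 ∧ Γ.2 ⊆ Δ.2

/-- The closure `Γ^∧` of `Γ`: add the edge `(a, \overline{a⁻¹b})` for all
vertices `a, b` of `Γ`. -/
def clo (Γ : Graph X G) : Graph X G :=
  (Γ.1, Γ.2 ∪ {e : G × YT X G | ∃ a ∈ Γ.1, ∃ b ∈ Γ.1, e = (a, Sum.inr (a⁻¹ * b))})

/-- `Γ` is closed. -/
def IsClosedGr (Γ : Graph X G) : Prop :=
  ∀ a ∈ Γ.1, ∀ b ∈ Γ.1, (a, (Sum.inr (a⁻¹ * b) : YT X G)) ∈ Γ.2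

/-- `𝒳_Y^∧`: all closed graphs in `𝒳_Y`. -/
def XYw (ι : X → G) : Set (Graph X G) := {Γ | Γ ∈ XY ι ∧ IsClosedGr Γ}

/-- The graph `Γ_1` with single vertex `1` and no edges. -/
def gammaOne : Graph X G := ({1}, ∅)

/-- The graph `Γ_x` for `x ∈ X`. -/
def gammaX (ι : X → G) (x : X) : Graph X G :=
  ({1, ι x}, {((1 : G), (Sum.inl x : YT X G))})

/-- The graph `Γ_ḡ` for `g ∈ G`. -/
def gammaBar (g : G) : Graph X G :=
  ({1, g}, {((1 : G), (Sum.inr g : YT X G))})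

/-- Raw elements: pairs `(Γ, g)`. -/
abbrev Elt (X G : Type*) := Graph X G × G

/-- The carrier of `M(G,Y)`. -/
def Mset (ι : X → G) : Set (Elt X G) := {p | p.1 ∈ XY ι ∧ p.2 ∈ p.1.1}

/-- Multiplication of `M(G,Y)`: `(A,g)(B,h) = (A ∪ gB, gh)`. -/
def mulM (p q : Elt X G) : Elt X G := (gunion p.1 (gmul p.2 q.1), p.2 * q.2)

/-- Inversion: `(A,g)⁻¹ = (g⁻¹A, g⁻¹)`. -/
def invM (p : Elt X G) : Elt X G := (gmul p.2⁻¹ p.1, p.2⁻¹)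

/-- The carrier of `M^∧(G,Y)`. -/
def Mwedge (ι : X → G) : Set (Elt X G) := {p | p.1 ∈ XYw ι ∧ p.2 ∈ p.1.1}

/-- Multiplication of `M^∧(G,Y)`: `(A,g)(B,h) = ((A ∪ gB)^∧, gh)`. -/
def mulW (p q : Elt X G) : Elt X G := (clo (gunion p.1 (gmul p.2 q.1)), p.2 * q.2)

/-- Natural partial order of `M^∧(G,Y)`: `s ≤ t` iff `s = s s⁻¹ t`. -/
def nleW (p q : Elt X G) : Prop := p = mulW (mulW p (invM p)) q

/-- Minimum group congruence `σ` of `M^∧(G,Y)`. -/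
def sigmaW (ι : X → G) (p q : Elt X G) : Prop :=
  ∃ u ∈ Mwedge ι, nleW u p ∧ nleW u q

/-- The `m`-operation of `M^∧(G,Y)`: `m(A, g) = (Γ_ḡ^∧, g)`. -/
def mW (p : Elt X G) : Elt X G := (clo (gammaBar p.2), p.2)

/-- Natural partial order of `M(G,Y)`. -/
def nleM (p q : Elt X G) : Prop := p = mulM (mulM p (invM p)) q

/-- Minimum group congruence `σ` of `M(G,Y)`. -/
def sigmaM (ι : X → G) (p q : Elt X G) : Prop :=
  ∃ u ∈ Mset ι, nleM u p ∧ nleM u q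

end FInvPaper
namespace FInvPaper

/-- A (candidate) subgraph of `Cay(G,X)`. -/
abbrev GraphX (X G : Type*) := Set G × Set (G × X)

variable {X G : Type*} [Group G]

/-- `Γ` is a finite subgraph of `Cay(G,X)` containing the origin. -/
def IsSubgraphX (ι : X → G) (Γ : GraphX X G) : Prop :=
  Γ.1.Finite ∧ Γ.2.Finite ∧ (1 : G) ∈ Γ.1 ∧
    ∀ e ∈ Γ.2, e.1 ∈ Γ.1 ∧ e.1 * ι e.2 ∈ Γ.1

/-- The edge relation of a subgraph of `Cay(G,X)`. -/
def edgeRelX (ι : X → G) (Γ : GraphX X G) (a b : G) : Prop :=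
  ∃ x : X, (a, x) ∈ Γ.2 ∧ b = a * ι x

/-- Connectedness of a subgraph of `Cay(G,X)`. -/
def IsConnX (ι : X → G) (Γ : GraphX X G) : Prop :=
  ∀ v ∈ Γ.1, Relation.EqvGen (edgeRelX ι Γ) 1 v

/-- `𝒳̃_X`: all finite (not necessarily connected) subgraphs of `Cay(G,X)`
containing the origin. -/
def tXX (ι : X → G) : Set (GraphX X G) := {Γ | IsSubgraphX ι Γ}

/-- The translate `gΓ` for subgraphs of `Cay(G,X)`. -/
def gmulX (g : G) (Γ : GraphX X G) : GraphX X G :=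
  ((g * ·) '' Γ.1, (fun e => (g * e.1, e.2)) '' Γ.2)

/-- Componentwise union. -/
def gunionX (Γ Δ : GraphX X G) : GraphX X G := (Γ.1 ∪ Δ.1, Γ.2 ∪ Δ.2)

/-- The carrier of `F(G,X)`. -/
def Fset (ι : X → G) : Set (GraphX X G × G) := {p | p.1 ∈ tXX ι ∧ p.2 ∈ p.1.1}

/-- Multiplication `(A,g)(B,h) = (A ∪ gB, gh)` (used both in `F(G,X)` and `M(G,X)`). -/
def mulMX (p q : GraphX X G × G) : GraphX X G × G :=
  (gunionX p.1 (gmulX p.2 q.1), p.2 * q.2)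

/-- Inversion `(A,g)⁻¹ = (g⁻¹A, g⁻¹)`. -/
def invMX (p : GraphX X G × G) : GraphX X G × G := (gmulX p.2⁻¹ p.1, p.2⁻¹)

/-- Erasing all edges with labels in `Ḡ`: the map `Γ ↦ Γ ∩ Cay(G,X)`. -/
def ff (Γ : Graph X G) : GraphX X G :=
  (Γ.1, {e : G × X | (e.1, (Sum.inl e.2 : YT X G)) ∈ Γ.2})

end FInvPaper

namespace FInvPaper

/-!
A closed subgraph of `Cay(G,Y)` contains every `Ḡ`-edge of `Cay(G,Y)` between its vertices, so its
vertices and its `X`-edges determine it. Conversely, any finite subgraph of `Cay(G,X)`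
containing the origin acquires all of these edges by closure, and they make it connected. Hence
erasing the `Ḡ`-edges and taking the closure are mutually inverse. As the edges added by closure
are erased again, the closure in the multiplication of `M^∧(G,Y)` is invisible in the image.
-/

section

variable {X G : Type*}

/-- A subgraph of `Cay(G,X)` regarded as a subgraph of `Cay(G,Y)`, through the left summand of
`Y = X ⊔ Ḡ`. Its closure is the closed graph with the same vertices and `X`-edges. -/
def ofGraphX (Δ : GraphX X G) : Graph X G :=
  (Δ.1, Prod.map id Sum.inl '' Δ.2)

/-- The map `(Γ, g) ↦ (Γ ∩ Cay(G,X), g)`, defined on all raw pairs. -/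
def eraseBar (p : Elt X G) : GraphX X G × G := (ff p.1, p.2)

theorem ff_ofGraphX (Δ : GraphX X G) : ff (ofGraphX Δ) = Δ := by
  simp [ff, ofGraphX]

theorem ff_gunion (Γ Δ : Graph X G) : ff (gunion Γ Δ) = gunionX (ff Γ) (ff Δ) := rfl

variable [Group G]

theorem isClosedGr_clo (Γ : Graph X G) : IsClosedGr (clo Γ) :=
  fun a ha b hb => Or.inr ⟨a, ha, b, hb, rfl⟩

theorem ff_clo (Γ : Graph X G) : ff (clo Γ) = ff Γ := by
  simp [ff, clo]

theorem ff_gmul (g : G) (Γ : Graph X G) : ff (gmul g Γ) = gmulX g (ff Γ) := by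
  refine Prod.ext rfl (Set.ext fun e => ?_)
  simp [ff, gmul, gmulX, Prod.ext_iff]

theorem ff_gammaBar (g : G) : ff (gammaBar g : Graph X G) = ({1, g}, ∅) := by
  simp [ff, gammaBar]

theorem ff_gammaX (ι : X → G) (x : X) : ff (gammaX ι x) = ({1, ι x}, {(1, x)}) := by
  refine Prod.ext rfl (Set.ext fun e => ?_)
  simp [ff, gammaX, Prod.ext_iff]

theorem eraseBar_mulW (p q : Elt X G) :
    eraseBar (mulW p q) = mulMX (eraseBar p) (eraseBar q) := by
  simp only [eraseBar, mulW, mulMX, ff_clo, ff_gunion, ff_gmul]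

theorem eraseBar_invM (p : Elt X G) : eraseBar (invM p) = invMX (eraseBar p) := by
  simp only [eraseBar, invM, invMX, ff_gmul]

theorem eraseBar_mW (p : Elt X G) : eraseBar (mW p) = (({1, p.2}, ∅), p.2) := by
  simp only [eraseBar, mW, ff_clo, ff_gammaBar]

theorem eraseBar_clo_gammaX (ι : X → G) (x : X) :
    eraseBar (clo (gammaX ι x), ι x) = (({1, ι x}, {(1, x)}), ι x) := by
  simp only [eraseBar, ff_clo, ff_gammaX]

variable {ι : X → G}

theorem IsClosedGr.isConn {Γ : Graph X G} (hΓ : IsClosedGr Γ) (h1 : 1 ∈ Γ.1) : IsConn ι Γ :=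
  fun v hv => .rel _ _ ⟨Sum.inr (1⁻¹ * v), hΓ 1 h1 v hv, by simp [iotaY]⟩

theorem IsClosedGr.inr_mem_iff {Γ : Graph X G} (hΓ : IsClosedGr Γ) (hsub : IsSubgraph ι Γ)
    {a g : G} : (a, Sum.inr g) ∈ Γ.2 ↔ a ∈ Γ.1 ∧ a * g ∈ Γ.1 := by
  obtain ⟨-, -, -, endpoints_mem⟩ := hsub
  refine ⟨fun he => endpoints_mem _ he, fun ⟨ha, hag⟩ => ?_⟩
  simpa only [inv_mul_cancel_left] using hΓ a ha (a * g) hag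

theorem isSubgraph_clo {Γ : Graph X G} (hΓ : IsSubgraph ι Γ) : IsSubgraph ι (clo Γ) := by
  obtain ⟨hV, hE, h1, endpoints_mem⟩ := hΓ
  have bar_finite : {e : G × YT X G |
      ∃ a ∈ Γ.1, ∃ b ∈ Γ.1, e = (a, Sum.inr (a⁻¹ * b))}.Finite := by
    refine (hV.image2 (fun a b => (a, Sum.inr (a⁻¹ * b))) hV).subset ?_
    rintro _ ⟨a, ha, b, hb, rfl⟩
    exact Set.mem_image2_of_mem ha hb
  refine ⟨hV, hE.union bar_finite, h1, ?_⟩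
  rintro _ (he | ⟨a, ha, b, hb, rfl⟩)
  · exact endpoints_mem _ he
  · exact ⟨ha, by simpa [iotaY, clo] using hb⟩

theorem clo_mem_XYw {Γ : Graph X G} (hΓ : IsSubgraph ι Γ) : clo Γ ∈ XYw ι :=
  ⟨⟨isSubgraph_clo hΓ, (isClosedGr_clo Γ).isConn hΓ.2.2.1⟩, isClosedGr_clo Γ⟩

theorem isSubgraphX_ff {Γ : Graph X G} (hΓ : IsSubgraph ι Γ) : IsSubgraphX ι (ff Γ) := by
  obtain ⟨hV, hE, h1, endpoints_mem⟩ := hΓ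
  have inl_injective : Function.Injective (Prod.map id Sum.inl : G × X → G × YT X G) :=
    Function.injective_id.prodMap Sum.inl_injective
  exact ⟨hV, hE.preimage inl_injective.injOn, h1, fun _ he => endpoints_mem _ he⟩

theorem isSubgraph_ofGraphX {Δ : GraphX X G} (hΔ : IsSubgraphX ι Δ) :
    IsSubgraph ι (ofGraphX Δ) := by
  obtain ⟨hV, hE, h1, endpoints_mem⟩ := hΔ
  exact ⟨hV, hE.image _, h1, Set.forall_mem_image.2 fun _ he => endpoints_mem _ he⟩

theorem clo_ofGraphX_ff {Γ : Graph X G} (hΓ : Γ ∈ XYw ι) : clo (ofGraphX (ff Γ)) = Γ := by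
  obtain ⟨⟨hsub, -⟩, hclosed⟩ := hΓ
  have hclo : IsSubgraph ι (clo (ofGraphX (ff Γ))) :=
    isSubgraph_clo (isSubgraph_ofGraphX (isSubgraphX_ff hsub))
  refine Prod.ext rfl (Set.ext ?_)
  rintro ⟨a, x | g⟩
  · simp [clo, ofGraphX, ff]
  · exact ((isClosedGr_clo _).inr_mem_iff hclo).trans (hclosed.inr_mem_iff hsub).symm

variable (ι)

theorem bijOn_ff : Set.BijOn ff (XYw ι) (tXX ι) := by
  have inverse : Set.InvOn (fun Δ => clo (ofGraphX Δ)) ff (XYw ι) (tXX ι) :=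
    ⟨fun _ hΓ => clo_ofGraphX_ff hΓ, fun Δ _ => (ff_clo _).trans (ff_ofGraphX Δ)⟩
  exact inverse.bijOn (fun _ hΓ => isSubgraphX_ff hΓ.1.1)
    (fun _ hΔ => clo_mem_XYw (isSubgraph_ofGraphX hΔ))

theorem bijOn_eraseBar : Set.BijOn eraseBar (Mwedge ι) (Fset ι) := by
  refine ⟨fun p hp => ⟨(bijOn_ff ι).mapsTo hp.1, hp.2⟩, fun p hp q hq hpq => ?_, ?_⟩
  · obtain ⟨hff, hsnd⟩ := Prod.ext_iff.1 hpq
    exact Prod.ext ((bijOn_ff ι).injOn hp.1 hq.1 hff) hsnd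
  · rintro ⟨Δ, g⟩ ⟨hΔ, hg⟩
    obtain ⟨Γ, hΓ, rfl⟩ := (bijOn_ff ι).surjOn hΔ
    exact ⟨(Γ, g), ⟨hΓ, hg⟩, rfl⟩

end

theorem Mwedge_iso_FGX_general {X G : Type*} [Group G] (ι : X → G) :
    Set.BijOn eraseBar (Mwedge ι) (Fset ι) ∧
    (∀ p q : Elt X G, eraseBar (mulW p q) = mulMX (eraseBar p) (eraseBar q)) ∧
    (∀ p : Elt X G, eraseBar (invM p) = invMX (eraseBar p)) ∧
    (∀ p : Elt X G, eraseBar (mW p) = (({1, p.2}, ∅), p.2)) ∧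
    (∀ x : X, eraseBar (clo (gammaX ι x), ι x) = (({1, ι x}, {(1, x)}), ι x)) :=
  ⟨bijOn_eraseBar ι, eraseBar_mulW, eraseBar_invM, eraseBar_mW, eraseBar_clo_gammaX ι⟩

/-- The map `(Γ, g) ↦ (Γ ∩ Cay(G,X), g)` is an isomorphism of
`F`-inverse monoids from `M^∧(G,Y)` onto `F(G,X)`: a bijection preserving
multiplication, inversion and the `m`-operation (sending `m(A,g) = (Γ_ḡ^∧, g)`
to `m` of the image, namely `(({1,g},∅), g)`), and sending the generator
`(Γ_x^∧, [x])` to `(Γ_x, [x])` for every `x ∈ X`. -/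
theorem Mwedge_iso_FGX {X G : Type*} [Nonempty X] [Group G] (ι : X → G)
    (hgen : Subgroup.closure (Set.range ι) = ⊤) :
    -- the map sends `M^∧(G,Y)` into `F(G,X)`
    (∀ p : Elt X G, p ∈ Mwedge ι → ((ff p.1, p.2) : GraphX X G × G) ∈ Fset ι) ∧
    -- it is injective on `M^∧(G,Y)`
    (∀ p q : Elt X G, p ∈ Mwedge ι → q ∈ Mwedge ι →
      ((ff p.1, p.2) : GraphX X G × G) = (ff q.1, q.2) → p = q) ∧
    -- it is surjective onto `F(G,X)`
    (∀ q ∈ Fset ι, ∃ p ∈ Mwedge ι, ((ff p.1, p.2) : GraphX X G × G) = q) ∧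
    -- it preserves multiplication
    (∀ p q : Elt X G, p ∈ Mwedge ι → q ∈ Mwedge ι →
      ((ff (mulW p q).1, (mulW p q).2) : GraphX X G × G) =
        mulMX (ff p.1, p.2) (ff q.1, q.2)) ∧
    -- it preserves inversion
    (∀ p : Elt X G, p ∈ Mwedge ι →
      ((ff (invM p).1, (invM p).2) : GraphX X G × G) = invMX (ff p.1, p.2)) ∧
    -- it preserves the `m`-operation
    (∀ p : Elt X G, p ∈ Mwedge ι →
      ((ff (mW p).1, (mW p).2) : GraphX X G × G) =
        ((({1, p.2}, ∅) : GraphX X G), p.2)) ∧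
    -- it sends `(Γ_x^∧, [x])` to `(Γ_x, [x])`
    (∀ x : X, ((ff (clo (gammaX ι x)), ι x) : GraphX X G × G) =
      (((({1, ι x} : Set G), ({((1 : G), x)} : Set (G × X))) : GraphX X G), ι x)) := by
  obtain ⟨⟨mapsTo, injOn, surjOn⟩, mul, inv, m, gen⟩ := Mwedge_iso_FGX_general ι
  exact ⟨fun _ hp => mapsTo hp, fun _ _ hp hq h => injOn hp hq h, surjOn,
    fun p q _ _ => mul p q, fun p _ => inv p, fun p _ => m p, gen⟩

end FInvPaper
end

section
/- Let a group G act partially on a meet-semilattice (L,⊓) by order isomorphisms between order ideals, and let j be a G-invariant dual-closure operator on L. Let L_j := {x ∈ L : j(x) = x} = j(L), and define on the set L_j ⋊ G := {(e,g) : e ∈ D_g ∩ L_j} the multiplication (e,g)·(f,h) := (j(φ_g(φ_{g⁻¹}(e) ⊓ f)), gh). Then the map L ⋊ G → L_j ⋊ G, (e,g) ↦ (j(e), g), is well defined and surjective, preserves multiplication, and two elements of L ⋊ G have the same image if and only if they are ρ̃_j-related; hence (L ⋊ G)/ρ̃_j is isomorphic to L_j ⋊ G. -/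
namespace FInvPaper

/-- A partial action of a group `G` on a meet-semilattice `L` by order
isomorphisms between order ideals: for each `g`, an order ideal `D g` and an
order isomorphism `act g : D g⁻¹ → D g` (encoded as a total function whose
relevant values are those on `D g⁻¹`). -/
structure PartialAction (G L : Type*) [Group G] [SemilatticeInf L] where
  /-- The domain ideals. -/
  D : G → Set L
  /-- The partial translations (as total functions). -/
  act : G → L → L
  /-- Each `D g` is an order ideal. -/
  ideal : ∀ g : G, ∀ x y : L, x ≤ y → y ∈ D g → x ∈ D g
  /-- `act g` maps `D g⁻¹` into `D g`. -/
  mem_act : ∀ g : G, ∀ x ∈ D g⁻¹, act g x ∈ D g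
  /-- `act g` is an order embedding on `D g⁻¹`. -/
  act_le_iff : ∀ g : G, ∀ x ∈ D g⁻¹, ∀ y ∈ D g⁻¹, (act g x ≤ act g y ↔ x ≤ y)
  /-- `act g` maps `D g⁻¹` onto `D g`. -/
  act_surj : ∀ g : G, ∀ z ∈ D g, ∃ x ∈ D g⁻¹, act g x = z
  /-- `D 1 = L`. -/
  D_one : D 1 = Set.univ
  /-- `act 1 = id`. -/
  act_one : ∀ x : L, act 1 x = x
  /-- `act g⁻¹` inverts `act g`. -/
  act_inv : ∀ g : G, ∀ x ∈ D g⁻¹, act g⁻¹ (act g x) = x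
  /-- Compatibility with composition. -/
  act_comp : ∀ g h : G, ∀ x ∈ D h⁻¹, act h x ∈ D g⁻¹ →
    x ∈ D (g * h)⁻¹ ∧ act (g * h) x = act g (act h x)

namespace PartialAction

variable {G L : Type*} [Group G] [SemilatticeInf L]

/-- The carrier of the partial action product `L ⋊ G`. -/
def carrier (P : PartialAction G L) : Set (L × G) := {p | p.1 ∈ P.D p.2}

/-- Multiplication of `L ⋊ G`: `(e,g)(f,h) = (φ_g(φ_{g⁻¹}(e) ⊓ f), gh)`. -/
def mul (P : PartialAction G L) (p q : L × G) : L × G :=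
  (P.act p.2 (P.act p.2⁻¹ p.1 ⊓ q.1), p.2 * q.2)

/-- Inversion of `L ⋊ G`: `(e,g)⁻¹ = (φ_{g⁻¹}(e), g⁻¹)`. -/
def inv (P : PartialAction G L) (p : L × G) : L × G := (P.act p.2⁻¹ p.1, p.2⁻¹)

/-- The natural partial order of `L ⋊ G`: `s ≤ t` iff `s = (s s⁻¹) t`. -/
def nle (P : PartialAction G L) (p q : L × G) : Prop :=
  p = P.mul (P.mul p (P.inv p)) q

/-- The minimum group congruence `σ` of `L ⋊ G`. -/
def sigma (P : PartialAction G L) (p q : L × G) : Prop :=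
  ∃ u ∈ P.carrier, P.nle u p ∧ P.nle u q

/-- A dual-closure operator `j` on `L` is `G`-invariant if `act g (j x) = j (act g x)`
whenever `x ∈ D g⁻¹` (in particular `j x ∈ D g⁻¹` then). -/
def GInvariant (P : PartialAction G L) (j : L → L) : Prop :=
  ∀ g : G, ∀ x ∈ P.D g⁻¹, j x ∈ P.D g⁻¹ ∧ P.act g (j x) = j (P.act g x)

end PartialAction

end FInvPaper

namespace FInvPaper

open PartialAction

/-! Since `j (j x ⊓ j y) = j (x ⊓ y)`, the kernel of `j` is a congruence for the meet, and
`G`-invariance makes it stable under every `φ_g`. The product of `L ⋊ G` is built from these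
operations alone, so applying `j` to its result does not distinguish between factors and their
images under `j`. -/

/-- Dual-closure operators: monotone, deflationary and idempotent self-maps of an order. They are
the closure operators of the dual order, but are kept unbundled so that `j` stays a plain
function on `L`. -/
structure IsDualClosure {L : Type*} [Preorder L] (j : L → L) : Prop where
  apply_le : ∀ x, j x ≤ x
  monotone : Monotone j
  idempotent : ∀ x, j (j x) = j x

theorem IsDualClosure.apply_inf_apply {L : Type*} [SemilatticeInf L] {j : L → L}
    (hj : IsDualClosure j) (x y : L) : j (j x ⊓ j y) = j (x ⊓ y) :=
  let c : ClosureOperator Lᵒᵈ :=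
    .mk' (OrderDual.toDual ∘ j ∘ OrderDual.ofDual) hj.monotone.dual hj.apply_le
      fun x => (hj.idempotent x).ge
  c.closure_sup_closure x y

namespace PartialAction

variable {G L : Type*} {j : L → L}

/-- The map `(e, g) ↦ (j e, g)` from `L ⋊ G` onto `L_j ⋊ G`, extended to all pairs. -/
def fixedProj (j : L → L) (p : L × G) : L × G := (j p.1, p.2)

/-- The relation `ρ̃_j`, extended to all pairs. -/
def RhoTilde (j : L → L) (p q : L × G) : Prop := p.2 = q.2 ∧ j p.1 = j q.1

theorem fixedProj_eq_iff_rhoTilde {p q : L × G} :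
    fixedProj j p = fixedProj j q ↔ RhoTilde j p q :=
  Prod.mk_inj.trans and_comm

variable [Group G] [SemilatticeInf L] {P : PartialAction G L} {g : G}

theorem act_inv_mem {x : L} (hx : x ∈ P.D g) : P.act g⁻¹ x ∈ P.D g⁻¹ :=
  P.mem_act g⁻¹ x (by rwa [inv_inv])

theorem GInvariant.act_inv_apply (hinv : P.GInvariant j) {x : L} (hx : x ∈ P.D g) :
    P.act g⁻¹ (j x) = j (P.act g⁻¹ x) :=
  (hinv g⁻¹ x (by rwa [inv_inv])).2

theorem GInvariant.apply_act_congr (hinv : P.GInvariant j) {x y : L} (hx : x ∈ P.D g⁻¹)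
    (hy : y ∈ P.D g⁻¹) (hxy : j x = j y) : j (P.act g x) = j (P.act g y) := by
  rw [← (hinv g x hx).2, ← (hinv g y hy).2, hxy]

/-- The carrier `{(e, g) : e ∈ D_g ∩ L_j}` of `L_j ⋊ G`, as a subset of that of `L ⋊ G`. -/
def fixedCarrier (P : PartialAction G L) (j : L → L) : Set (L × G) :=
  {p ∈ P.carrier | j p.1 = p.1}

/-- The multiplication of `L_j ⋊ G`: the product of `L ⋊ G` projected back to `L_j ⋊ G`. -/
def fixedMul (P : PartialAction G L) (j : L → L) (p q : L × G) : L × G :=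
  fixedProj j (P.mul p q)

theorem mapsTo_fixedProj (P : PartialAction G L) (hj : IsDualClosure j) :
    Set.MapsTo (fixedProj j) P.carrier (P.fixedCarrier j) :=
  fun p hp => ⟨P.ideal p.2 _ _ (hj.apply_le p.1) hp, hj.idempotent p.1⟩

theorem surjOn_fixedProj (P : PartialAction G L) (j : L → L) :
    Set.SurjOn (fixedProj j) P.carrier (P.fixedCarrier j) :=
  fun q ⟨hq, hjq⟩ => ⟨q, hq, Prod.ext hjq rfl⟩

theorem fixedProj_mul (hj : IsDualClosure j) (hinv : P.GInvariant j) {p : L × G}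
    (hp : p ∈ P.carrier) (q : L × G) :
    fixedProj j (P.mul p q) = P.fixedMul j (fixedProj j p) (fixedProj j q) := by
  obtain ⟨e, g⟩ := p
  obtain ⟨f, h⟩ := q
  set e' := P.act g⁻¹ e
  have mem_of_le {x : L} (hx : x ≤ e') : x ∈ P.D g⁻¹ := P.ideal _ _ _ hx (act_inv_mem hp)
  have fst_eq : j (P.act g (e' ⊓ f)) = j (P.act g (P.act g⁻¹ (j e) ⊓ j f)) := calc
    j (P.act g (e' ⊓ f)) = j (P.act g (j e' ⊓ j f)) :=
      hinv.apply_act_congr (mem_of_le inf_le_left)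
        (mem_of_le (inf_le_left.trans (hj.apply_le e'))) (hj.apply_inf_apply e' f).symm
    _ = j (P.act g (P.act g⁻¹ (j e) ⊓ j f)) := by rw [hinv.act_inv_apply hp]
  exact Prod.ext fst_eq rfl

end PartialAction

/-- With `G`, `L`, `j` as in Statement 4, let
`L_j = {x : j x = x}` and let `L_j ⋊ G = {(e,g) : e ∈ D g ∩ L_j}` carry the
multiplication `(e,g)·(f,h) = (j (φ_g (φ_{g⁻¹} e ⊓ f)), gh)`.  Then the map
`L ⋊ G → L_j ⋊ G`, `(e,g) ↦ (j e, g)`, is well defined and surjective, preserves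
multiplication, and identifies exactly the `ρ̃_j`-related pairs; hence
`(L ⋊ G)/ρ̃_j ≅ L_j ⋊ G`. -/
theorem quotient_by_rhoJtilde {G L : Type*} [Group G] [SemilatticeInf L]
    (P : PartialAction G L) (j : L → L)
    (hj_le : ∀ x : L, j x ≤ x)
    (hj_mono : ∀ x y : L, x ≤ y → j x ≤ j y)
    (hj_idem : ∀ x : L, j (j x) = j x)
    (hGinv : P.GInvariant j) :
    -- the map is well defined: it lands in `L_j ⋊ G`
    (∀ p : L × G, p ∈ P.carrier → (j p.1 ∈ P.D p.2 ∧ j (j p.1) = j p.1)) ∧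
    -- it is surjective onto `L_j ⋊ G`
    (∀ q : L × G, q.1 ∈ P.D q.2 → j q.1 = q.1 →
      ∃ p ∈ P.carrier, ((j p.1, p.2) : L × G) = q) ∧
    -- it preserves multiplication (the product in `L_j ⋊ G` of the images)
    (∀ p q : L × G, p ∈ P.carrier → q ∈ P.carrier →
      ((j (P.mul p q).1, (P.mul p q).2) : L × G) =
        (j (P.act p.2 (P.act p.2⁻¹ (j p.1) ⊓ j q.1)), p.2 * q.2)) ∧
    -- two elements have the same image iff they are `ρ̃_j`-related
    (∀ p q : L × G, p ∈ P.carrier → q ∈ P.carrier →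
      (((j p.1, p.2) : L × G) = (j q.1, q.2) ↔ (p.2 = q.2 ∧ j p.1 = j q.1))) := by
  have hj : IsDualClosure j := ⟨hj_le, fun x y => hj_mono x y, hj_idem⟩
  exact ⟨fun _ hp => P.mapsTo_fixedProj hj hp,
    fun _ hq hjq => P.surjOn_fixedProj j ⟨hq, hjq⟩,
    fun _ q hp _ => fixedProj_mul hj hGinv hp q,
    fun _ _ _ _ => fixedProj_eq_iff_rhoTilde⟩

end FInvPaper
end

section
/- For every nonempty word w = y₁ ⋯ y_n over Y ∪ Y⁻¹, set g₀ = 1 and g_i = g_{i−1}·ι_Y-value of y_i (i.e. g_i = g_{i−1}·ι_Y(y) if y_i = y ∈ Y and g_i = g_{i−1}·ι_Y(y)⁻¹ if y_i = y⁻¹), and let Γ_w be the subgraph of Cay(G,Y) with vertex set {g₀, g₁, …, g_n} and positive edge set consisting, for each i, of (g_{i−1}, y) if y_i = y ∈ Y and of (g_i, y) if y_i = y⁻¹. Then Γ_w ∈ 𝒳_Y and the value of w in M(G,Y) (under the generating map y ↦ (Γ_y, ι_Y(y)) for y ∈ Y, extended to inverse letters by inversion) equals (Γ_w, g_n); the value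 of the empty word is (Γ_1, 1). -/
namespace FInvPaper

variable {X G : Type*} [Group G]

/-- The graph `Γ_y` for a letter `y ∈ Y`: vertices `1, ι_Y(y)` and the positive
edge `(1, y)`. -/
def gammaY (ι : X → G) (y : YT X G) : Graph X G := ({1, iotaY ι y}, {((1 : G), y)})

/-- The generator `(Γ_y, ι_Y(y))` of `M(G,Y)`. -/
def genM (ι : X → G) (y : YT X G) : Elt X G := (gammaY ι y, iotaY ι y)

/-- The `G`-value of a signed letter over `Y`. -/
def sval (ι : X → G) (l : YT X G × Bool) : G :=
  if l.2 then iotaY ι l.1 else (iotaY ι l.1)⁻¹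

/-- The `G`-value `g_n` of a word over `Y ∪ Y⁻¹`. -/
def evalSigned (ι : X → G) : List (YT X G × Bool) → G
  | [] => 1
  | l :: w => sval ι l * evalSigned ι w

/-- The graph `Γ_w` of the word `w` read from the vertex `g`: its vertices are
the partial products `g = g₀, g₁, …, g_n`, with the positive edge
`(g_{i-1}, y)` for a positive letter `y` and `(g_i, y)` for a negative one. -/
def wordGraph (ι : X → G) : G → List (YT X G × Bool) → Graph X G
  | g, [] => ({g}, ∅)
  | g, l :: w =>
      gunion ({g, g * sval ι l}, {((if l.2 then g else g * sval ι l), l.1)})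
        (wordGraph ι (g * sval ι l) w)

/-- The value of a word over `Y ∪ Y⁻¹` in `M(G,Y)` under `y ↦ (Γ_y, ι_Y(y))`,
extended to inverse letters by inversion; the empty word has value `(Γ_1, 1)`. -/
def evalWordM (ι : X → G) : List (YT X G × Bool) → Elt X G
  | [] => (gammaOne, 1)
  | l :: w => mulM (if l.2 then genM ι l.1 else invM (genM ι l.1)) (evalWordM ι w)

/-!
The set `M(G,Y)` contains `(Γ_1, 1)` and the generators `(Γ_y, ι_Y(y))`, and it is closed under
multiplication and inversion: if `g` is a vertex of a connected graph `A ∋ 1`, then the translate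
`gB` of a connected graph `B ∋ 1` is attached to `A` at `g`. Hence the value of every word is in
`M(G,Y)`. On the other hand, reading a word from `hg` translates by `h` the path read from `g`, so
the recursion for the value of a word is the one that builds `(Γ_w, g_n)` letter by letter; in
particular `Γ_w ∈ 𝒳_Y`.
-/

section Translation

theorem gmul_gunion (g : G) (Γ Δ : Graph X G) :
    gmul g (gunion Γ Δ) = gunion (gmul g Γ) (gmul g Δ) := by
  simp only [gmul, gunion, Set.image_union]

theorem endpoints_mem_gmul {ι : X → G} {Γ : Graph X G}
    (hΓ : ∀ e ∈ Γ.2, e.1 ∈ Γ.1 ∧ e.1 * iotaY ι e.2 ∈ Γ.1) (g : G) :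
    ∀ e ∈ (gmul g Γ).2, e.1 ∈ (gmul g Γ).1 ∧ e.1 * iotaY ι e.2 ∈ (gmul g Γ).1 := by
  rintro _ ⟨e, he, rfl⟩
  obtain ⟨hsource, htarget⟩ := hΓ e he
  exact ⟨⟨_, hsource, rfl⟩, ⟨_, htarget, (mul_assoc ..).symm⟩⟩

theorem edgeRel_gmul {ι : X → G} {Γ : Graph X G} (g : G) {a b : G} (hab : edgeRel ι Γ a b) :
    edgeRel ι (gmul g Γ) (g * a) (g * b) := by
  obtain ⟨y, hy, rfl⟩ := hab
  exact ⟨y, ⟨_, hy, rfl⟩, (mul_assoc ..).symm⟩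

theorem edgeRel_mono (ι : X → G) {Γ Δ : Graph X G} (h : Γ.2 ⊆ Δ.2) :
    edgeRel ι Γ ≤ edgeRel ι Δ :=
  fun _ _ ⟨y, hy, hb⟩ => ⟨y, h hy, hb⟩

theorem eqvGen_map {α β : Type*} {r : α → α → Prop} {s : β → β → Prop} (f : α → β)
    (hf : ∀ a b, r a b → s (f a) (f b)) {a b : α} (hab : Relation.EqvGen r a b) :
    Relation.EqvGen s (f a) (f b) :=
  Quot.eqvGen_exact (congrArg (Quot.map f hf) (Quot.eqvGen_sound hab))

theorem eqvGen_edgeRel_gmul {ι : X → G} {Γ : Graph X G} (g : G) {a b : G}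
    (hab : Relation.EqvGen (edgeRel ι Γ) a b) :
    Relation.EqvGen (edgeRel ι (gmul g Γ)) (g * a) (g * b) :=
  eqvGen_map (g * ·) (fun _ _ => edgeRel_gmul g) hab

end Translation

section Operations

variable {ι : X → G} {Γ Δ : Graph X G} {g : G}

theorem isSubgraph_gmul (hΓ : IsSubgraph ι Γ) (hg : g⁻¹ ∈ Γ.1) : IsSubgraph ι (gmul g Γ) := by
  obtain ⟨hV, hE, -, hends⟩ := hΓ
  exact ⟨hV.image _, hE.image _, ⟨_, hg, mul_inv_cancel g⟩, endpoints_mem_gmul hends g⟩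

theorem isSubgraph_gunion_gmul (hΓ : IsSubgraph ι Γ) (hΔ : IsSubgraph ι Δ) (g : G) :
    IsSubgraph ι (gunion Γ (gmul g Δ)) := by
  obtain ⟨hVΓ, hEΓ, hone, hendsΓ⟩ := hΓ
  obtain ⟨hVΔ, hEΔ, -, hendsΔ⟩ := hΔ
  refine ⟨hVΓ.union (hVΔ.image _), hEΓ.union (hEΔ.image _), .inl hone, ?_⟩
  rintro e (he | he)
  · exact (hendsΓ e he).imp .inl .inl
  · exact (endpoints_mem_gmul hendsΔ g e he).imp .inr .inr

theorem isConn_gmul (hΓ : IsConn ι Γ) (hg : g⁻¹ ∈ Γ.1) : IsConn ι (gmul g Γ) := by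
  rintro _ ⟨v, hv, rfl⟩
  have hpath : Relation.EqvGen (edgeRel ι Γ) g⁻¹ v := .trans _ _ _ (.symm _ _ (hΓ _ hg)) (hΓ v hv)
  simpa only [mul_inv_cancel] using eqvGen_edgeRel_gmul g hpath

theorem isConn_gunion_gmul (hΓ : IsConn ι Γ) (hΔ : IsConn ι Δ) (hg : g ∈ Γ.1) :
    IsConn ι (gunion Γ (gmul g Δ)) := by
  have hleft : ∀ v ∈ Γ.1, Relation.EqvGen (edgeRel ι (gunion Γ (gmul g Δ))) 1 v := fun v hv =>
    (hΓ v hv).mono (edgeRel_mono ι Set.subset_union_left) _ _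
  rintro _ (hv | ⟨v, hv, rfl⟩)
  · exact hleft _ hv
  · have hpath : Relation.EqvGen (edgeRel ι (gmul g Δ)) g (g * v) := by
      simpa only [mul_one] using eqvGen_edgeRel_gmul g (hΔ v hv)
    exact .trans _ _ _ (hleft g hg) (hpath.mono (edgeRel_mono ι Set.subset_union_right) _ _)

theorem mulM_mem_Mset {p q : Elt X G} (hp : p ∈ Mset ι) (hq : q ∈ Mset ι) :
    mulM p q ∈ Mset ι := by
  obtain ⟨⟨hpSub, hpConn⟩, hpV⟩ := hp
  obtain ⟨⟨hqSub, hqConn⟩, hqV⟩ := hq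
  exact ⟨⟨isSubgraph_gunion_gmul hpSub hqSub p.2, isConn_gunion_gmul hpConn hqConn hpV⟩,
    .inr ⟨_, hqV, rfl⟩⟩

theorem invM_mem_Mset {p : Elt X G} (hp : p ∈ Mset ι) : invM p ∈ Mset ι := by
  obtain ⟨⟨hSub, hConn⟩, hV⟩ := hp
  have hV' : p.2⁻¹⁻¹ ∈ p.1.1 := by rwa [inv_inv]
  have hone : (1 : G) ∈ p.1.1 := hSub.2.2.1
  exact ⟨⟨isSubgraph_gmul hSub hV', isConn_gmul hConn hV'⟩, ⟨1, hone, mul_one _⟩⟩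

end Operations

section Generators

variable (ι : X → G)

theorem gammaOne_mem_XY : (gammaOne : Graph X G) ∈ XY ι := by
  refine ⟨⟨Set.finite_singleton _, Set.finite_empty, rfl, fun _ he => he.elim⟩, ?_⟩
  rintro _ rfl
  exact .refl _

theorem gammaY_mem_XY (y : YT X G) : gammaY ι y ∈ XY ι := by
  refine ⟨⟨Set.toFinite {1, iotaY ι y}, Set.finite_singleton _, .inl rfl, ?_⟩, ?_⟩
  · rintro _ rfl
    exact ⟨.inl rfl, .inr (one_mul _)⟩
  · rintro _ (rfl | rfl)
    · exact .refl _
    · exact .rel _ _ ⟨y, rfl, (one_mul _).symm⟩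

theorem one_mem_Mset : ((gammaOne, 1) : Elt X G) ∈ Mset ι :=
  ⟨gammaOne_mem_XY ι, rfl⟩

theorem genM_mem_Mset (y : YT X G) : genM ι y ∈ Mset ι :=
  ⟨gammaY_mem_XY ι y, .inr rfl⟩

end Generators

section Words

variable (ι : X → G)

/-- The value in `M(G,Y)` of a signed letter: `(Γ_y, ι_Y(y))` for `y` and its inverse for `y⁻¹`,
the Boolean `true` marking a positive letter. -/
def letterM (l : YT X G × Bool) : Elt X G :=
  if l.2 then genM ι l.1 else invM (genM ι l.1)

/-- The one-edge graph traversed when the signed letter `l` is read from the vertex `g`. Since only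
positive edges are recorded, the edge of a negative letter starts at `g * sval ι l`. -/
def letterGraph (g : G) (l : YT X G × Bool) : Graph X G :=
  ({g, g * sval ι l}, {((if l.2 then g else g * sval ι l), l.1)})

theorem evalWordM_cons (l : YT X G × Bool) (w : List (YT X G × Bool)) :
    evalWordM ι (l :: w) = mulM (letterM ι l) (evalWordM ι w) :=
  rfl

theorem wordGraph_cons (g : G) (l : YT X G × Bool) (w : List (YT X G × Bool)) :
    wordGraph ι g (l :: w) = gunion (letterGraph ι g l) (wordGraph ι (g * sval ι l) w) :=
  rfl

theorem letterM_mem_Mset (l : YT X G × Bool) : letterM ι l ∈ Mset ι := by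
  unfold letterM
  split_ifs
  · exact genM_mem_Mset ι l.1
  · exact invM_mem_Mset (genM_mem_Mset ι l.1)

theorem evalWordM_mem_Mset (w : List (YT X G × Bool)) : evalWordM ι w ∈ Mset ι := by
  induction w with
  | nil => exact one_mem_Mset ι
  | cons l w ih => exact mulM_mem_Mset (letterM_mem_Mset ι l) ih

theorem letterM_eq (l : YT X G × Bool) : letterM ι l = (letterGraph ι 1 l, sval ι l) := by
  obtain ⟨y, _ | _⟩ := l
  · simp [letterM, letterGraph, genM, invM, gmul, gammaY, sval, Set.image_pair, Set.pair_comm]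
  · simp [letterM, letterGraph, genM, gammaY, sval]

theorem letterGraph_mul_eq_gmul (h g : G) (l : YT X G × Bool) :
    letterGraph ι (h * g) l = gmul h (letterGraph ι g l) := by
  simp only [letterGraph, gmul, Set.image_pair, Set.image_singleton, mul_ite, mul_assoc]

theorem wordGraph_mul_eq_gmul (h g : G) (w : List (YT X G × Bool)) :
    wordGraph ι (h * g) w = gmul h (wordGraph ι g w) := by
  induction w generalizing g with
  | nil => simp [wordGraph, gmul]
  | cons l w ih =>
    rw [wordGraph_cons, wordGraph_cons, gmul_gunion, letterGraph_mul_eq_gmul, mul_assoc, ih]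

theorem evalWordM_eq (w : List (YT X G × Bool)) :
    evalWordM ι w = (wordGraph ι 1 w, evalSigned ι w) := by
  induction w with
  | nil => rfl
  | cons l w ih =>
    have htail : wordGraph ι (1 * sval ι l) w = gmul (sval ι l) (wordGraph ι 1 w) := by
      rw [one_mul, ← wordGraph_mul_eq_gmul, mul_one]
    rw [evalWordM_cons, wordGraph_cons, htail, ih, letterM_eq]
    rfl

theorem wordGraph_one_mem_XY (w : List (YT X G × Bool)) : wordGraph ι 1 w ∈ XY ι := by
  have hmem : (wordGraph ι 1 w, evalSigned ι w) ∈ Mset ι :=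
    evalWordM_eq ι w ▸ evalWordM_mem_Mset ι w
  exact hmem.1

end Words

theorem value_of_word_in_MGY_general {X G : Type*} [Group G] (ι : X → G)
    (w : List (YT X G × Bool)) :
    wordGraph ι 1 w ∈ XY ι ∧ evalWordM ι w = (wordGraph ι 1 w, evalSigned ι w) :=
  ⟨wordGraph_one_mem_XY ι w, evalWordM_eq ι w⟩

/-- For every nonempty word `w` over `Y ∪ Y⁻¹`, the graph
`Γ_w` (spanned by the corresponding path from the origin) belongs to `𝒳_Y` and
the value of `w` in `M(G,Y)` equals `(Γ_w, g_n)`, where `g_n` is the value of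
`w` in `G`; the value of the empty word is `(Γ_1, 1)`. -/
theorem value_of_word_in_MGY {X G : Type*} [Nonempty X] [Group G] (ι : X → G)
    (hgen : Subgroup.closure (Set.range ι) = ⊤) :
    evalWordM ι ([] : List (YT X G × Bool)) = ((gammaOne, 1) : Elt X G) ∧
    ∀ w : List (YT X G × Bool), w ≠ [] →
      wordGraph ι 1 w ∈ XY ι ∧
      evalWordM ι w = ((wordGraph ι 1 w, evalSigned ι w) : Elt X G) :=
  ⟨rfl, fun w _ => value_of_word_in_MGY_general ι w⟩

end FInvPaper
end
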